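/- arXiv:math/0412181 — 2 statements merged into one kernel-verified Lean document; each statement's English description precedes it below -/
import Mathlib

section
/- Let K ≥ 1 be an integer and let s ∈ ℂ with Re s > −K+1 and s ≠ 1. Then ζ(s) = 1/(s−1) + 1/2 + ∑_{k=2}^{K} C(s+k−2, k−1)·(B_k/k) − C(s+K−1, K) ∫_1^∞ B_K({t}) t^{−s−K} dt, where C(s+k−2, k−1) = (∏_{j=0}^{k−2}(s+j))/(k−1)! and C(s+K−1, K) = (∏_{j=0}^{K−1}(s+j))/K! denote generalized binomial coefficients. -/
open MeasureTheory Polynomial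

namespace ZetaEM

open Set Filter Topology

/-- The periodized Bernoulli integrand. -/
noncomputable def F (K : ℕ) (s : ℂ) (t : ℝ) : ℂ :=
  ((bernoulliFun K (Int.fract t) : ℝ) : ℂ) * (t:ℂ) ^ (-s - (K:ℂ))

noncomputable def EMI (K : ℕ) (s : ℂ) : ℂ := ∫ t in Ioi (1:ℝ), F K s t

lemma exists_bound (K : ℕ) : ∃ C : ℝ, ∀ t : ℝ, ‖((bernoulliFun K (Int.fract t) : ℝ) : ℂ)‖ ≤ C := by
  obtain ⟨C, hC⟩ := (isCompact_Icc (a := (0:ℝ)) (b := 1)).exists_bound_of_continuousOn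
    (continuous_bernoulliFun K).continuousOn
  refine ⟨C, fun t => ?_⟩
  rw [Complex.norm_real]
  exact hC _ ⟨Int.fract_nonneg t, (Int.fract_lt_one t).le⟩

lemma meas (K : ℕ) : Measurable fun t : ℝ => ((bernoulliFun K (Int.fract t) : ℝ) : ℂ) :=
  Complex.measurable_ofReal.comp ((continuous_bernoulliFun K).measurable.comp measurable_fract)

lemma F_integrable (K : ℕ) (s : ℂ) (hs : -(K:ℝ) + 1 < s.re) :
    IntegrableOn (F K s) (Ioi 1) := by
  obtain ⟨C, hC⟩ := exists_bound K
  have h := integrableOn_Ioi_cpow_of_lt (a := -s - K) (by simp; linarith) (zero_lt_one)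
  exact Integrable.bdd_mul h (meas K).aestronglyMeasurable (ae_of_all _ hC)

lemma piece (K : ℕ) (s : ℂ) (n : ℕ) :
    ∫ t in ((n:ℝ)+1)..((n+1:ℕ):ℝ)+1, F K s t =
      ((bernoulliFun (K+1) 1 : ℝ) : ℂ) / (K+1) * (1 / ((n+1:ℕ)+1:ℂ) ^ (s+K))
      - ((bernoulliFun (K+1) 0 : ℝ) : ℂ) / (K+1) * (1 / ((n:ℂ)+1) ^ (s+K))
      + (s+K)/(K+1) * ∫ t in ((n:ℝ)+1)..((n+1:ℕ):ℝ)+1, F (K+1) s t := by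
  have key : ∀ J : ℕ, ∫ t in ((n:ℝ)+1)..((n+1:ℕ):ℝ)+1, F J s t =
      ∫ t in ((n:ℝ)+1)..((n+1:ℕ):ℝ)+1,
        (t:ℂ) ^ (-s - (J:ℂ)) * ((bernoulliFun J (t - (n+1)) : ℝ) : ℂ) := by
    intro J
    apply intervalIntegral.integral_congr_Ioo_of_le (by push_cast; linarith)
    intro t ht
    have : Int.fract t = t - (n+1) := by
      rw [Int.fract_eq_iff]
      have h1 := ht.1
      have h2 := ht.2
      push_cast at h1 h2
      refine ⟨by linarith, by linarith, (n+1:ℤ), by push_cast; ring⟩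
    simp only [F, this]
    ring
  rw [key, key]
  have hpos : ∀ t ∈ uIcc ((n:ℝ)+1) (((n+1:ℕ):ℝ)+1), 0 < t := by
    intro t ht
    rw [uIcc_of_le (by push_cast; linarith)] at ht
    have := ht.1
    have h0 : (0:ℝ) ≤ n := n.cast_nonneg
    linarith
  have hcont : ∀ a : ℂ, ContinuousOn (fun t : ℝ => (t:ℂ)^a)
      (uIcc ((n:ℝ)+1) (((n+1:ℕ):ℝ)+1)) := fun a t ht =>
    (Complex.continuousAt_ofReal_cpow_const _ _ (Or.inr (hpos t ht).ne')).continuousWithinAt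
  have hu : ∀ t ∈ uIcc ((n:ℝ)+1) (((n+1:ℕ):ℝ)+1),
      HasDerivAt (fun t : ℝ => (t:ℂ) ^ (-s - (K:ℂ)))
        ((-s-K) * (t:ℂ) ^ (-s - ((K+1:ℕ):ℂ))) t := by
    intro t ht
    have h1 : HasDerivAt (fun z : ℂ => z ^ (-s - (K:ℂ))) ((-s-K) * (t:ℂ)^(-s-(K:ℂ)-1)) (t:ℂ) := by
      have := (hasDerivAt_id (t:ℂ)).cpow_const (c := -s - (K:ℂ))
        (Complex.ofReal_mem_slitPlane.2 (hpos t ht))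
      simpa using this
    convert! h1.comp_ofReal using 3
    push_cast; ring
  have hv : ∀ t ∈ uIcc ((n:ℝ)+1) (((n+1:ℕ):ℝ)+1),
      HasDerivAt (fun t : ℝ => ((bernoulliFun (K+1) (t - (n+1)) / (K+1) : ℝ) : ℂ))
        ((bernoulliFun K (t - (n+1)) : ℝ) : ℂ) t := by
    intro t ht
    exact ((antideriv_bernoulliFun K (t-(n+1))).comp_sub_const t (n+1:ℝ)).ofReal_comp
  rw [intervalIntegral.integral_mul_deriv_eq_deriv_mul hu hv
    (((hcont _).const_smul (-s-(K:ℂ))).intervalIntegrable)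
    (Continuous.intervalIntegrable (by fun_prop) _ _)]
  have e1 : (((n+1:ℕ):ℝ)+1) - (n+1) = 1 := by push_cast; ring
  have e0 : ((n:ℝ)+1) - (n+1) = 0 := by ring
  have hneg : -s - (K:ℂ) = -(s+K) := by ring
  rw [e1, e0]
  have : (fun x : ℝ => (-s - (K:ℂ)) * (x:ℂ) ^ (-s - ((K+1:ℕ):ℂ)) *
      ((bernoulliFun (K+1) (x-(n+1)) / (K+1) : ℝ):ℂ)) = fun x : ℝ => (-((s+K)/(K+1))) *
      ((x:ℂ) ^ (-s - ((K+1:ℕ):ℂ)) * ((bernoulliFun (K+1) (x-(n+1)) : ℝ):ℂ)) := by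
    funext x
    push_cast
    ring
  rw [this, intervalIntegral.integral_const_mul, hneg, Complex.cpow_neg, Complex.cpow_neg]
  push_cast
  ring

lemma EMI_tendsto (K : ℕ) (s : ℂ) (hs : -(K:ℝ) + 1 < s.re) :
    Tendsto (fun N : ℕ => ∑ n ∈ Finset.range N, ∫ t in ((n:ℝ)+1)..((n+1:ℕ):ℝ)+1, F K s t)
      atTop (𝓝 (EMI K s)) := by
  have hb : Tendsto (fun N : ℕ => (N:ℝ)+1) atTop atTop :=
    tendsto_atTop_add_const_right _ _ tendsto_natCast_atTop_atTop
  have h := intervalIntegral_tendsto_integral_Ioi 1 (F_integrable K s hs) hb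
  refine h.congr fun N => ?_
  rw [intervalIntegral.sum_integral_adjacent_intervals (a := fun n : ℕ => (n:ℝ)+1)]
  · simp
  · intro k _
    rw [intervalIntegrable_iff_integrableOn_Ioc_of_le (by push_cast; linarith)]
    refine (F_integrable K s hs).mono_set fun t ht => ?_
    have := ht.1
    have h0 : (0:ℝ) ≤ k := k.cast_nonneg
    exact lt_of_le_of_lt (by linarith) this

lemma recurrence (K : ℕ) (s : ℂ) (hs : 1 < s.re) :
    EMI K s = ((bernoulliFun (K+1) 1 : ℝ) : ℂ) / (K+1) * (riemannZeta (s+K) - 1)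
      - ((bernoulliFun (K+1) 0 : ℝ) : ℂ) / (K+1) * riemannZeta (s+K)
      + (s+K)/(K+1) * EMI (K+1) s := by
  have hK : (0:ℝ) ≤ K := K.cast_nonneg
  have hre : 1 < (s+K).re := by simp; linarith
  have hsum : Summable fun n : ℕ => 1 / ((n:ℂ)+1)^(s+K) := by
    have := (summable_nat_add_iff 1).2 (Complex.summable_one_div_nat_cpow.2 hre)
    simpa using this
  have hz : HasSum (fun n : ℕ => 1 / ((n:ℂ)+1)^(s+K)) (riemannZeta (s+K)) := by
    rw [zeta_eq_tsum_one_div_nat_add_one_cpow hre]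
    exact hsum.hasSum
  have hz1 : HasSum (fun n : ℕ => 1 / (((n+1:ℕ):ℂ)+1)^(s+K)) (riemannZeta (s+K) - 1) := by
    have := (hasSum_nat_add_iff' 1).2 hz
    simpa using this
  refine tendsto_nhds_unique (EMI_tendsto K s (by linarith)) ?_
  have h3 := (((hz1.mul_left (((bernoulliFun (K+1) 1 : ℝ) : ℂ) / (K+1))).sub
    (hz.mul_left (((bernoulliFun (K+1) 0 : ℝ) : ℂ) / (K+1)))).tendsto_sum_nat).add
    ((EMI_tendsto (K+1) s (by push_cast; linarith)).const_mul ((s+K)/(K+1)))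
  refine h3.congr fun N => ?_
  rw [Finset.mul_sum, ← Finset.sum_add_distrib]
  exact Finset.sum_congr rfl fun n _ => (piece K s n).symm

/-- Everything on the right-hand side except the pole. -/
noncomputable def R (K : ℕ) (s : ℂ) : ℂ :=
  1/2 + (∑ k ∈ Finset.Icc 2 K,
          ((∏ j ∈ Finset.range (k-1), (s + (j:ℂ))) / (Nat.factorial (k-1)))
            * (((bernoulli k : ℚ) : ℂ) / (k:ℂ)))
      - ((∏ j ∈ Finset.range K, (s + (j:ℂ))) / (Nat.factorial K)) * EMI K s

lemma zeta_eq_R (K : ℕ) (hK : 1 ≤ K) (s : ℂ) (hs : 1 < s.re) :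
    riemannZeta s = 1/(s-1) + R K s := by
  induction K, hK using Nat.le_induction with
  | base =>
    have h0 : EMI 0 s = 1/(s-1) := by
      have h := integral_Ioi_cpow_of_lt (a := -s) (by simp; linarith) (zero_lt_one)
      have h1 : s - 1 ≠ 0 := by
        intro h; rw [sub_eq_zero] at h; simp [h] at hs
      have h2 : -s + 1 ≠ 0 := by
        intro h; apply h1; linear_combination -h
      simp only [EMI, F, bernoulliFun_zero]
      simp only [Complex.ofReal_one, one_mul, Nat.cast_zero, sub_zero, h, Complex.one_cpow]
      rw [div_eq_div_iff h2 h1]; ring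
    have h := recurrence 0 s hs
    rw [h0] at h
    simp [R] at h ⊢
    rw [h]
    ring
  | succ K hK ih =>
    rw [ih]
    have h := recurrence K s hs
    rw [bernoulliFun_endpoints_eq_of_ne_one (by omega), bernoulliFun_eval_zero] at h
    rw [R, R, Finset.sum_Icc_succ_top (by omega), Finset.prod_range_succ, Nat.factorial_succ, h]
    have h1 : ((K:ℂ)+1) ≠ 0 := Nat.cast_add_one_ne_zero K
    have h2 : (Nat.factorial K : ℂ) ≠ 0 := by exact_mod_cast Nat.factorial_ne_zero K
    simp only [Nat.add_sub_cancel]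
    push_cast
    field_simp
    ring

lemma EMI_diff (K : ℕ) (s : ℂ) (hs : -(K:ℝ) + 1 < s.re) :
    DifferentiableAt ℂ (EMI K) s := by
  set f : ℝ → ℂ := (Ioi (1:ℝ)).indicator fun t => ((bernoulliFun K (Int.fract t) : ℝ) : ℂ) with hf
  obtain ⟨C, hC⟩ := exists_bound K
  have hfC : ∀ t, ‖f t‖ ≤ C := fun t => (norm_indicator_le_norm_self _ _).trans (hC t)
  have hfm : Measurable f := (meas K).indicator measurableSet_Ioi
  have heq : EMI K = fun s => mellin f (1 - s - K) := by
    funext z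
    rw [EMI, mellin]
    have h1 : ∀ t : ℝ, (t:ℂ)^(1 - z - K - 1) • f t = (Ioi (1:ℝ)).indicator (F K z) t := by
      intro t
      by_cases ht : t ∈ Ioi (1:ℝ)
      · simp only [hf, indicator_of_mem ht, F, smul_eq_mul]
        rw [mul_comm]; congr 2; ring
      · simp [hf, indicator_of_notMem ht]
    simp_rw [h1]
    rw [setIntegral_indicator measurableSet_Ioi]
    congr 2
    ext x; simp only [mem_Ioi, mem_inter_iff]
    constructor
    · intro h; exact ⟨by linarith, h⟩
    · exact fun h => h.2
  rw [heq]
  have hloc : LocallyIntegrableOn f (Ioi 0) := by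
    apply LocallyIntegrable.locallyIntegrableOn
    refine (locallyIntegrable_const (C:ℝ)).mono hfm.aestronglyMeasurable (ae_of_all _ fun t => ?_)
    exact (hfC t).trans (le_abs_self C)
  have htop : f =O[atTop] (fun t : ℝ => t ^ (-(0:ℝ))) := by
    refine Asymptotics.IsBigO.of_bound C (Eventually.of_forall fun t => ?_)
    simpa using hfC t
  have hbot : f =O[𝓝[>] 0] (fun t : ℝ => t ^ (-((1 - s - K).re - 1))) := by
    refine Asymptotics.IsBigO.of_bound 1 ?_
    have : ∀ᶠ t : ℝ in 𝓝[>] 0, t < 1 := nhdsWithin_le_nhds (eventually_lt_nhds zero_lt_one)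
    filter_upwards [this] with t ht
    have : f t = 0 := indicator_of_notMem (by simp [ht.le]) _
    rw [this]
    simp
  have hd := mellin_differentiableAt_of_isBigO_rpow (s := 1 - s - K) hloc htop
    (by simp; linarith) hbot (by linarith)
  exact DifferentiableAt.comp (g := mellin f) (f := fun s : ℂ => 1 - s - K) s hd (by fun_prop)

lemma main (K : ℕ) (hK : 1 ≤ K) (s : ℂ) (hs : -(K:ℝ) + 1 < s.re) (hs1 : s ≠ 1) :
    riemannZeta s = 1/(s-1) + R K s := by
  have hopen : IsOpen {z : ℂ | -(K:ℝ) + 1 < z.re} :=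
    isOpen_lt continuous_const Complex.continuous_re
  have hR : DifferentiableOn ℂ (R K) {z : ℂ | -(K:ℝ) + 1 < z.re} := by
    intro z hz
    have h := EMI_diff K z hz
    apply DifferentiableAt.differentiableWithinAt
    unfold R
    fun_prop
  have hK0 : (0:ℝ) ≤ K := K.cast_nonneg
  have hopen2 : IsOpen {z : ℂ | 1 < z.re} := isOpen_lt continuous_const Complex.continuous_re
  have heq := (differentiable_riemannZeta₀.differentiableOn.analyticOnNhd
    hopen).eqOn_of_preconnected_of_eventuallyEq (hR.analyticOnNhd hopen)
    (convex_halfSpace_re_gt _).isPreconnected (z₀ := 2) (by simp; linarith) (by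
      filter_upwards [hopen2.mem_nhds (show (2:ℂ) ∈ {z : ℂ | 1 < z.re} by simp)] with z hz
      have hz1 : z ≠ 1 := by rintro rfl; simp at hz
      have h1 := zeta_eq_R K hK z hz
      have h2 := riemannZeta_eq_inv_sub_add hz1
      rw [h1, one_div] at h2
      exact (add_left_cancel h2).symm)
  rw [riemannZeta_eq_inv_sub_add hs1, heq hs, one_div]

end ZetaEM

/-- Euler–Maclaurin expansion of the Riemann zeta function: for `K ≥ 1` and
`Re s > −K+1`, `s ≠ 1`,
`ζ(s) = 1/(s−1) + 1/2 + ∑_{k=2}^K C(s+k−2,k−1)·B_k/k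
  − C(s+K−1,K) ∫_1^∞ B_K({t}) t^{−s−K} dt`,
where `C(s+k−2,k−1) = (∏_{j=0}^{k−2} (s+j))/(k−1)!`. -/
theorem zeta_euler_maclaurin (K : ℕ) (hK : 1 ≤ K) (s : ℂ)
    (hs : -(K:ℝ) + 1 < s.re) (hs1 : s ≠ 1) :
    riemannZeta s =
      1/(s-1) + 1/2
      + (∑ k ∈ Finset.Icc 2 K,
          ((∏ j ∈ Finset.range (k-1), (s + (j:ℂ))) / (Nat.factorial (k-1)))
            * (((bernoulli k : ℚ) : ℂ) / (k:ℂ)))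
      - ((∏ j ∈ Finset.range K, (s + (j:ℂ))) / (Nat.factorial K))
          * ∫ t in Set.Ioi (1:ℝ),
              ((Polynomial.aeval (Int.fract t) (Polynomial.bernoulli K) : ℝ) : ℂ)
                * (t:ℂ) ^ (-s - (K:ℂ)) := by
  rw [ZetaEM.main K hK s hs hs1, ZetaEM.R]
  have h : ZetaEM.EMI K s = ∫ t in Set.Ioi (1:ℝ),
      ((Polynomial.aeval (Int.fract t) (Polynomial.bernoulli K) : ℝ) : ℂ)
        * (t:ℂ) ^ (-s - (K:ℂ)) := by
    simp only [ZetaEM.EMI, ZetaEM.F, bernoulliFun, Polynomial.eval_map_algebraMap]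
  rw [h]
  ring
end

section
/- Let N ≥ 1 and K ≥ 1 be integers and let s ∈ ℂ with Re s > −K+1 and s ≠ 1. Then ζ(s) − ∑_{n=1}^{N} n^{−s} = N^{1−s}/(s−1) + ∑_{k=1}^{K} C(s+k−2, k−1)·(B_k/k)·N^{−s−k+1} − C(s+K−1, K) ∫_N^∞ B_K({t}) t^{−s−K} dt, where C(s+k−2, k−1) = (∏_{j=0}^{k−2}(s+j))/(k−1)! and C(s+K−1, K) = (∏_{j=0}^{K−1}(s+j))/K! denote generalized binomial coefficients. -/
open MeasureTheory Polynomial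

/-- periodized Bernoulli function -/
noncomputable def perB (k : ℕ) (t : ℝ) : ℂ := ((bernoulliFun k (Int.fract t) : ℝ) : ℂ)

lemma perB_meas (k : ℕ) : Measurable (perB k) := by
  unfold perB
  exact Complex.measurable_ofReal.comp
    ((continuous_bernoulliFun k).measurable.comp measurable_fract)

lemma perB_bound (k : ℕ) : ∃ C, ∀ t, ‖perB k t‖ ≤ C := by
  obtain ⟨C, hC⟩ := (isCompact_Icc (a := (0:ℝ)) (b := 1)).exists_bound_of_continuousOn
    (continuous_bernoulliFun k).continuousOn
  refine ⟨C, fun t => ?_⟩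
  rw [perB, Complex.norm_real]
  exact hC _ ⟨Int.fract_nonneg t, (Int.fract_lt_one t).le⟩

lemma perB_unit (k n : ℕ) (g : ℝ → ℂ) :
    ∫ t in (n:ℝ)..(n+1:ℕ), perB k t * g t =
      ∫ t in (n:ℝ)..(n+1:ℕ), ((bernoulliFun k (t - n) : ℝ) : ℂ) * g t := by
  rw [intervalIntegral.integral_of_le (by simp), intervalIntegral.integral_of_le (by simp),
    integral_Ioc_eq_integral_Ioo, integral_Ioc_eq_integral_Ioo]
  refine setIntegral_congr_fun measurableSet_Ioo fun t ht => ?_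
  have : ⌊t⌋ = (n:ℤ) := by
    rw [Int.floor_eq_iff]
    have := ht.2
    push_cast at this ⊢
    exact ⟨ht.1.le, this⟩
  simp [perB, Int.fract, this]

lemma unit_step (k n : ℕ) (hn : 1 ≤ n) (w : ℂ) (hw : w ≠ 0) :
    ∫ t in (n:ℝ)..(n+1:ℕ), perB k t * (t:ℂ) ^ (-w) =
      (((bernoulliFun (k+1) 1 : ℝ) : ℂ) * ((n+1:ℕ):ℂ) ^ (-w)
        - ((bernoulliFun (k+1) 0 : ℝ) : ℂ) * (n:ℂ) ^ (-w)) / (k+1)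
      + w / (k+1) * ∫ t in (n:ℝ)..(n+1:ℕ), perB (k+1) t * (t:ℂ) ^ (-w-1) := by
  have hn0 : (0:ℝ) < n := by exact_mod_cast hn
  rw [perB_unit, perB_unit]
  have hpos : ∀ x ∈ Set.uIcc (n:ℝ) (n+1:ℕ), x ≠ 0 := by
    intro x hx
    rw [Set.uIcc_of_le (by simp)] at hx
    exact (lt_of_lt_of_le hn0 hx.1).ne'
  have hk : (k:ℂ) + 1 ≠ 0 := by exact_mod_cast Nat.succ_ne_zero k
  have hcp : ∀ r : ℂ, ContinuousOn (fun t : ℝ => (t:ℂ) ^ r) (Set.uIcc (n:ℝ) (n+1:ℕ)) :=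
    fun r x hx => (Complex.continuousAt_ofReal_cpow_const _ _
      (Or.inr (hpos x hx))).continuousWithinAt
  have key := intervalIntegral.integral_mul_deriv_eq_deriv_mul
    (a := (n:ℝ)) (b := ((n+1:ℕ):ℝ))
    (u := fun t : ℝ => (t:ℂ) ^ (-w)) (u' := fun t : ℝ => (-w) * (t:ℂ) ^ (-w - 1))
    (v := fun t : ℝ => ((bernoulliFun (k+1) (t - n) / (k+1) : ℝ) : ℂ))
    (v' := fun t : ℝ => ((bernoulliFun k (t - n) : ℝ) : ℂ))
    (fun x hx => hasDerivAt_ofReal_cpow_const (hpos x hx) (neg_ne_zero.mpr hw))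
    (fun x _ => ((antideriv_bernoulliFun k (x - n)).comp_sub_const x n).ofReal_comp)
    ((hcp _).const_smul (-w)).intervalIntegrable
    (Continuous.intervalIntegrable (by fun_prop) _ _)
  simp only [mul_comm (((bernoulliFun _ _ : ℝ) : ℂ)) _] at key ⊢
  rw [key]
  have : ∀ x : ℝ, -w * (x:ℂ) ^ (-w-1) * ((bernoulliFun (k+1) (x - n) / (k+1) : ℝ) : ℂ)
      = (-w / (k+1)) * ((x:ℂ) ^ (-w-1) * ((bernoulliFun (k+1) (x - n) : ℝ) : ℂ)) := by
    intro x; push_cast; field_simp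
  simp only [this, intervalIntegral.integral_const_mul]
  push_cast
  simp only [add_sub_cancel_left, sub_self]
  field_simp
  ring

/-- truncated function whose Mellin transform is our integral -/
noncomputable def truncB (k N : ℕ) : ℝ → ℂ := (Set.Ioi (N:ℝ)).indicator (perB k)

lemma truncB_hyps (k N : ℕ) (hN : 1 ≤ N) (b : ℝ) :
    LocallyIntegrableOn (truncB k N) (Set.Ioi 0) ∧
    (truncB k N) =O[Filter.atTop] (fun x : ℝ => x ^ (-(0:ℝ))) ∧
    (truncB k N) =O[nhdsWithin 0 (Set.Ioi 0)] (fun x : ℝ => x ^ (-b)) := by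
  obtain ⟨C, hC⟩ := perB_bound k
  have hC' : ∀ t, ‖truncB k N t‖ ≤ C := fun t =>
    (norm_indicator_le_norm_self _ _).trans (hC t)
  refine ⟨?_, ?_, ?_⟩
  · apply LocallyIntegrable.locallyIntegrableOn
    refine (locallyIntegrable_const C).mono
      ((perB_meas k).indicator measurableSet_Ioi).aestronglyMeasurable ?_
    exact Filter.Eventually.of_forall fun t => (hC' t).trans (le_abs_self C)
  · refine Asymptotics.IsBigO.of_bound C (Filter.Eventually.of_forall fun t => ?_)
    simpa using hC' t
  · refine Asymptotics.IsBigO.of_bound 1 ?_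
    have : Set.Iio (1:ℝ) ∈ nhdsWithin 0 (Set.Ioi 0) :=
      mem_nhdsWithin_of_mem_nhds (Iio_mem_nhds one_pos)
    filter_upwards [this] with t ht
    have : t ∉ Set.Ioi (N:ℝ) := by
      have : (1:ℝ) ≤ N := by exact_mod_cast hN
      have h2 : t < 1 := ht
      simp; linarith
    rw [truncB, Set.indicator_of_notMem this]
    simp

lemma trunc_mellin (k N : ℕ) (z : ℂ) :
    mellin (truncB k N) z = ∫ t in Set.Ioi (N:ℝ), perB k t * (t:ℂ) ^ (z - 1) := by
  rw [mellin, ← integral_indicator measurableSet_Ioi, ← integral_indicator measurableSet_Ioi]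
  congr 1
  ext t
  by_cases h : t ∈ Set.Ioi (N:ℝ)
  · have : t ∈ Set.Ioi (0:ℝ) := Set.mem_Ioi.mpr (lt_of_le_of_lt (Nat.cast_nonneg N) (Set.mem_Ioi.mp h))
    rw [Set.indicator_of_mem this, Set.indicator_of_mem h, truncB, Set.indicator_of_mem h,
      smul_eq_mul, mul_comm]
  · rw [Set.indicator_of_notMem h]
    simp [truncB, Set.indicator_of_notMem h, -Set.mem_Ioi]

lemma perB_integrable (k N : ℕ) (hN : 1 ≤ N) (w : ℂ) (hw : 1 < w.re) :
    IntegrableOn (fun t : ℝ => perB k t * (t:ℂ) ^ (-w)) (Set.Ioi (N:ℝ)) := by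
  obtain ⟨h1, h2, h3⟩ := truncB_hyps k N hN ((1-w).re - 1)
  have := mellinConvergent_of_isBigO_rpow (s := 1 - w) h1 h2 (by simp; linarith) h3 (by linarith)
  rw [MellinConvergent] at this
  have h4 := this.mono_set (Set.Ioi_subset_Ioi (Nat.cast_nonneg N : (0:ℝ) ≤ N))
  refine h4.congr_fun (fun t ht => ?_) measurableSet_Ioi
  simp only [truncB, Set.indicator_of_mem ht, smul_eq_mul]
  rw [mul_comm]; congr 2; ring

lemma perB_differentiable (k N : ℕ) (hN : 1 ≤ N) (s : ℂ) (hs : -(k:ℝ) + 1 < s.re) :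
    DifferentiableAt ℂ (fun s : ℂ => ∫ t in Set.Ioi (N:ℝ), perB k t * (t:ℂ) ^ (-s - (k:ℂ))) s := by
  obtain ⟨h1, h2, h3⟩ := truncB_hyps k N hN ((1-s-k).re - 1)
  have := mellin_differentiableAt_of_isBigO_rpow (s := 1 - s - k) h1 h2
    (by simp; linarith) h3 (by linarith)
  have h5 : (fun s : ℂ => ∫ t in Set.Ioi (N:ℝ), perB k t * (t:ℂ) ^ (-s - (k:ℂ))) =
      (mellin (truncB k N)) ∘ (fun s => 1 - s - (k:ℂ)) := by
    ext z
    simp only [Function.comp, trunc_mellin]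
    congr! 4
    ring
  rw [h5]
  exact DifferentiableAt.comp s this (by fun_prop)

lemma perB_intervalIntegrable (k N M : ℕ) (hN : 1 ≤ N) (hM : N ≤ M) (w : ℂ) (hw : 1 < w.re) :
    IntervalIntegrable (fun t : ℝ => perB k t * (t:ℂ) ^ (-w)) volume N M := by
  rw [intervalIntegrable_iff_integrableOn_Ioc_of_le (by exact_mod_cast hM)]
  exact (perB_integrable k N hN w hw).mono_set Set.Ioc_subset_Ioi_self

lemma finite_step (k N m : ℕ) (hN : 1 ≤ N) (w : ℂ) (hw : 1 < w.re) :
    ∫ t in (N:ℝ)..(N+m:ℕ), perB k t * (t:ℂ) ^ (-w) =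
      ((bernoulli (k+1) : ℚ) : ℂ) / (k+1) * (((N+m:ℕ):ℂ) ^ (-w) - (N:ℂ) ^ (-w))
      + (if k = 0 then ∑ i ∈ Finset.range m, ((N+i+1:ℕ):ℂ) ^ (-w) else 0)
      + w / (k+1) * ∫ t in (N:ℝ)..(N+m:ℕ), perB (k+1) t * (t:ℂ) ^ (-w-1) := by
  have hw0 : w ≠ 0 := by rintro rfl; simp at hw; linarith
  have hw1 : 1 < (w+1).re := by simp; linarith
  have e : -w - 1 = -(w+1) := by ring
  induction m with
  | zero => simp
  | succ m ih =>
    have a1 := intervalIntegral.integral_add_adjacent_intervals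
      (perB_intervalIntegrable k N (N+m) hN (by omega) w hw)
      (perB_intervalIntegrable k (N+m) (N+m+1) (by omega) (by omega) w hw)
    have a2 := intervalIntegral.integral_add_adjacent_intervals
      (perB_intervalIntegrable (k+1) N (N+m) hN (by omega) _ hw1)
      (perB_intervalIntegrable (k+1) (N+m) (N+m+1) (by omega) (by omega) _ hw1)
    rw [← e] at a2
    rw [← add_assoc N m 1, ← a1, ← a2, ih]
    have := unit_step k (N+m) (by omega) w hw0
    rw [this, bernoulliFun_eval_one, bernoulliFun_eval_zero]
    have hk : (k:ℂ) + 1 ≠ 0 := by exact_mod_cast Nat.succ_ne_zero k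
    by_cases h : k = 0
    · subst h
      simp only [if_true, Finset.sum_range_succ]
      push_cast
      simp
      ring
    · simp [h]
      ring

lemma infinite_step (k N : ℕ) (hN : 1 ≤ N) (w : ℂ) (hw : 1 < w.re) :
    ∫ t in Set.Ioi (N:ℝ), perB k t * (t:ℂ) ^ (-w) =
      -(((bernoulli (k+1) : ℚ) : ℂ) / (k+1) * (N:ℂ) ^ (-w))
      + (if k = 0 then riemannZeta w - ∑ n ∈ Finset.Icc 1 N, (n:ℂ) ^ (-w) else 0)
      + w / (k+1) * ∫ t in Set.Ioi (N:ℝ), perB (k+1) t * (t:ℂ) ^ (-w-1) := by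
  have hw1 : 1 < (w+1).re := by simp; linarith
  have e : -w - 1 = -(w+1) := by ring
  have hcast : Filter.Tendsto (fun m : ℕ => ((N+m:ℕ):ℝ)) Filter.atTop Filter.atTop :=
    tendsto_natCast_atTop_atTop.comp (Filter.tendsto_atTop_mono (fun m => by simp) Filter.tendsto_id)
  have T1 := intervalIntegral_tendsto_integral_Ioi (N:ℝ) (perB_integrable k N hN w hw) hcast
  have T2 := intervalIntegral_tendsto_integral_Ioi (N:ℝ) (perB_integrable (k+1) N hN (w+1) hw1) hcast
  rw [← e] at T2
  have T3 : Filter.Tendsto (fun m : ℕ => ((N+m:ℕ):ℂ) ^ (-w)) Filter.atTop (nhds 0) := by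
    rw [tendsto_zero_iff_norm_tendsto_zero]
    have := (tendsto_rpow_neg_atTop (y := w.re) (by linarith)).comp hcast
    refine this.congr fun m => ?_
    rw [Complex.norm_natCast_cpow_of_pos (by omega)]
    simp
  have T4 : Filter.Tendsto (fun m : ℕ => if k = 0 then
      ∑ i ∈ Finset.range m, ((N+i+1:ℕ):ℂ) ^ (-w) else 0) Filter.atTop
      (nhds (if k = 0 then riemannZeta w - ∑ n ∈ Finset.Icc 1 N, (n:ℂ) ^ (-w) else 0)) := by
    split_ifs
    · have hsum : Summable (fun n : ℕ => ((n+1:ℕ):ℂ) ^ (-w)) := by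
        have := (summable_nat_add_iff 1).mpr (Complex.summable_one_div_nat_cpow.mpr hw)
        simpa [Complex.cpow_neg] using this
      have hz : riemannZeta w = ∑' n : ℕ, ((n+1:ℕ):ℂ) ^ (-w) := by
        rw [zeta_eq_tsum_one_div_nat_add_one_cpow hw]
        simp [Complex.cpow_neg]
      have hh := hsum.hasSum
      rw [← hz, ← hasSum_nat_add_iff' N] at hh
      have h2 := hh.tendsto_sum_nat
      have h3 : ∑ n ∈ Finset.Icc 1 N, (n:ℂ) ^ (-w) = ∑ i ∈ Finset.range N, ((i+1:ℕ):ℂ) ^ (-w) := by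
        rw [Finset.range_eq_Ico, Finset.sum_Ico_add' (fun n : ℕ => (n:ℂ) ^ (-w)) 0 N 1]
        rfl
      rw [h3]
      simpa [add_comm, add_left_comm, add_assoc] using h2
    · exact tendsto_const_nhds
  have T5 := ((((T3.sub_const ((N:ℂ)^(-w))).const_mul
    (((bernoulli (k+1) : ℚ) : ℂ) / (k+1))).add T4).add (T2.const_mul (w/(k+1))))
  have := tendsto_nhds_unique T1 (T5.congr fun m => (finite_step k N m hN w hw).symm)
  rw [this]; ring

lemma main_aux (N K : ℕ) (hN : 1 ≤ N) (s : ℂ) (hs : 1 < s.re) :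
    riemannZeta s - (∑ n ∈ Finset.Icc 1 N, (n:ℂ) ^ (-s)) =
      (N:ℂ) ^ (1 - s) / (s - 1)
      + (∑ k ∈ Finset.Icc 1 (K+1),
          ((∏ j ∈ Finset.range (k-1), (s + (j:ℂ))) / (Nat.factorial (k-1)))
            * (((bernoulli k : ℚ) : ℂ) / (k:ℂ)) * (N:ℂ) ^ (-s - (k:ℂ) + 1))
      - ((∏ j ∈ Finset.range (K+1), (s + (j:ℂ))) / (Nat.factorial (K+1)))
          * ∫ t in Set.Ioi (N:ℝ), perB (K+1) t * (t:ℂ) ^ (-s - ((K+1:ℕ):ℂ)) := by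
  induction K with
  | zero =>
    have h := infinite_step 0 N hN s hs
    have h0 : ∫ t in Set.Ioi (N:ℝ), perB 0 t * (t:ℂ) ^ (-s) = (N:ℂ) ^ (1 - s) / (s - 1) := by
      simp only [perB, bernoulliFun_zero, Complex.ofReal_one, one_mul]
      rw [integral_Ioi_cpow_of_lt (by simp; linarith) (by exact_mod_cast hN)]
      rw [show -s + 1 = -(s-1) by ring, div_neg, neg_div, neg_neg]
      simp
    rw [h0] at h
    rw [h]
    simp
    ring
  | succ K ih =>
    rw [ih, Finset.sum_Icc_succ_top (b := K+1) (by omega)]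
    have h := infinite_step (K+1) N hN (s + ((K+1:ℕ):ℂ)) (by
      have : (0:ℝ) ≤ K := Nat.cast_nonneg K
      simp; linarith)
    rw [neg_add'] at h
    rw [h, Finset.prod_range_succ _ (K+1), Nat.factorial_succ (K+1)]
    have e1 : -s - ((K+1+1:ℕ):ℂ) + 1 = -s - ((K+1:ℕ):ℂ) := by push_cast; ring
    have e2 : -s - ((K+1:ℕ):ℂ) - 1 = -s - ((K+1+1:ℕ):ℂ) := by push_cast; ring
    rw [e1, e2]
    have hk : ((K+1:ℕ):ℂ) + 1 ≠ 0 := by exact_mod_cast Nat.succ_ne_zero (K+1)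
    have hf : (Nat.factorial (K+1) : ℂ) ≠ 0 := by exact_mod_cast Nat.factorial_ne_zero _
    simp only [Nat.succ_ne_zero, if_false, Nat.add_sub_cancel, Nat.cast_mul, Nat.cast_add_one (K+1)]
    field_simp
    ring

theorem zeta_tail_euler_maclaurin (N K : ℕ) (hN : 1 ≤ N) (hK : 1 ≤ K) (s : ℂ)
    (hs : -(K:ℝ) + 1 < s.re) (hs1 : s ≠ 1) :
    riemannZeta s - (∑ n ∈ Finset.Icc 1 N, (n:ℂ) ^ (-s)) =
      (N:ℂ) ^ (1 - s) / (s - 1)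
      + (∑ k ∈ Finset.Icc 1 K,
          ((∏ j ∈ Finset.range (k-1), (s + (j:ℂ))) / (Nat.factorial (k-1)))
            * (((bernoulli k : ℚ) : ℂ) / (k:ℂ)) * (N:ℂ) ^ (-s - (k:ℂ) + 1))
      - ((∏ j ∈ Finset.range K, (s + (j:ℂ))) / (Nat.factorial K))
          * ∫ t in Set.Ioi (N:ℝ),
              ((Polynomial.aeval (Int.fract t) (Polynomial.bernoulli K) : ℝ) : ℂ)
                * (t:ℂ) ^ (-s - (K:ℂ)) := by
  have hP : ∀ t : ℝ, ((Polynomial.aeval (Int.fract t) (Polynomial.bernoulli K) : ℝ) : ℂ)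
      = perB K t := by
    intro t
    simp [perB, bernoulliFun, Polynomial.eval_map_algebraMap]
  simp only [hP]
  have hN0 : (N:ℂ) ≠ 0 := by exact_mod_cast (by omega : N ≠ 0)
  let R : ℂ → ℂ := fun s => (∑ k ∈ Finset.Icc 1 K,
          ((∏ j ∈ Finset.range (k-1), (s + (j:ℂ))) / (Nat.factorial (k-1)))
            * (((bernoulli k : ℚ) : ℂ) / (k:ℂ)) * (N:ℂ) ^ (-s - (k:ℂ) + 1))
      - ((∏ j ∈ Finset.range K, (s + (j:ℂ))) / (Nat.factorial K))
          * ∫ t in Set.Ioi (N:ℝ), perB K t * (t:ℂ) ^ (-s - (K:ℂ))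
  let U : Set ℂ := {z | -(K:ℝ) + 1 < z.re}
  have hU : IsOpen U := isOpen_lt continuous_const Complex.continuous_re
  have hUc : IsPreconnected U := (convex_halfSpace_re_gt _).isPreconnected
  let F : ℂ → ℂ := fun s => riemannZeta₁ s - (s-1) * ∑ n ∈ Finset.Icc 1 N, (n:ℂ) ^ (-s)
  let G : ℂ → ℂ := fun s => (N:ℂ) ^ (1 - s) + (s-1) * R s
  have hF : AnalyticOnNhd ℂ F U := by
    refine DifferentiableOn.analyticOnNhd (Differentiable.differentiableOn ?_) hU
    refine differentiable_riemannZeta₁.sub (Differentiable.mul (by fun_prop) ?_)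
    refine Differentiable.fun_sum fun n hn => ?_
    have : (n:ℂ) ≠ 0 := by
      have := (Finset.mem_Icc.mp hn).1
      exact_mod_cast (by omega : n ≠ 0)
    exact Differentiable.const_cpow (by fun_prop) (Or.inl this)
  have hG : AnalyticOnNhd ℂ G U := by
    refine DifferentiableOn.analyticOnNhd (fun z hz => ?_) hU
    apply DifferentiableAt.differentiableWithinAt
    have hd : ∀ f : ℂ → ℂ, Differentiable ℂ f → DifferentiableAt ℂ (fun s => (N:ℂ) ^ (f s)) z :=
      fun f hf => DifferentiableAt.const_cpow (hf z) (Or.inl hN0)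
    refine (hd _ (by fun_prop)).add (DifferentiableAt.mul (by fun_prop) ?_)
    refine DifferentiableAt.sub (DifferentiableAt.fun_sum fun k _ => ?_) 
      (DifferentiableAt.mul ?_ (perB_differentiable K N hN z hz))
    · exact DifferentiableAt.mul (by fun_prop) (hd _ (by fun_prop))
    · fun_prop
  have h2U : (2:ℂ) ∈ U := by
    simp only [U, Set.mem_ofPred_eq, Complex.re_ofNat]
    have : (0:ℝ) ≤ K := Nat.cast_nonneg K
    linarith
  have hEv : F =ᶠ[nhds 2] G := by
    have : {z : ℂ | 1 < z.re} ∈ nhds (2:ℂ) :=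
      (isOpen_lt continuous_const Complex.continuous_re).mem_nhds (by simp)
    filter_upwards [this] with z hz
    have hz1 : z ≠ 1 := by rintro rfl; simp at hz
    have hz1' : z - 1 ≠ 0 := sub_ne_zero.mpr hz1
    have h := main_aux N (K-1) hN z hz
    rw [Nat.sub_add_cancel hK, riemannZeta_eq_inv_sub_mul hz1, add_sub_assoc] at h
    change _ = _ + R z at h
    simp only [F, G]
    field_simp at h
    linear_combination h
  have h := hF.eqOn_of_preconnected_of_eventuallyEq hG hUc h2U hEv hs
  have hs1' : s - 1 ≠ 0 := sub_ne_zero.mpr hs1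
  rw [riemannZeta_eq_inv_sub_mul hs1, add_sub_assoc]
  change _ = _ + R s
  simp only [F, G] at h
  field_simp
  linear_combination h
end
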